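/- arXiv:2106.15071 — 5 statements merged into one kernel-verified Lean document; each statement's English description precedes it below -/
import Mathlib

section
/- Let H be a real Hilbert space, K ⊆ H a nonempty closed convex set, and α > 0 a real number. Let p, q, s, d, e ∈ H, and let a be the projection of d − (1/α)p onto K and b the projection of e − (1/α)q onto K. If ⟨a − b, s − p⟩ ≤ 0, then α‖a − b‖ ≤ ‖q − s‖ + α‖d − e‖. -/
/-! The projection `z` of `x` onto a convex set `K` satisfies the variational inequality
`⟪x - z, w - z⟫ ≤ 0` for all `w ∈ K`. Testing the inequality for `a` with `w = b` and the one for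
`b` with `w = a`, adding them and multiplying by `α` gives
`α ‖a - b‖² ≤ ⟪a - b, q - p⟫ + α ⟪a - b, d - e⟫`. Splitting `q - p = (q - s) + (s - p)`, the
sign hypothesis removes the `s - p` term, and Cauchy–Schwarz followed by division by `‖a - b‖`
finishes. -/

open scoped RealInnerProductSpace

/-- The variational inequality for a nearest point of a convex set. -/
theorem inner_le_zero_of_nearest {H : Type*} [NormedAddCommGroup H] [InnerProductSpace ℝ H]
    {K : Set H} (hK : Convex ℝ K) {x z : H} (hz : z ∈ K) (hmin : ∀ w ∈ K, ‖x - z‖ ≤ ‖x - w‖)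
    {w : H} (hw : w ∈ K) : ⟪x - z, w - z⟫ ≤ 0 := by
  have : Nonempty K := ⟨⟨z, hz⟩⟩
  refine (norm_eq_iInf_iff_real_inner_le_zero hK hz).1 (le_antisymm ?_ ?_) w hw
  · exact le_ciInf fun w => hmin w w.2
  · exact ciInf_le ⟨0, by rintro _ ⟨w, rfl⟩; exact norm_nonneg _⟩ (⟨z, hz⟩ : K)

/-- Let `H` be a real Hilbert space, `K` a nonempty closed convex set, `α > 0`
and `p, q, s, d, e ∈ H`. Let `a` be the projection of `d − (1/α) p` onto `K` and `b` the
projection of `e − (1/α) q` onto `K`. If `⟪a − b, s − p⟫ ≤ 0`, then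
`α ‖a − b‖ ≤ ‖q − s‖ + α ‖d − e‖`. -/
theorem stmt10
    {H : Type*} [NormedAddCommGroup H] [InnerProductSpace ℝ H] [CompleteSpace H]
    (K : Set H) (hK_ne : K.Nonempty) (hK_cl : IsClosed K) (hK_conv : Convex ℝ K)
    (α : ℝ) (hα : 0 < α) (p q s d e : H)
    (a b : H)
    (ha : a ∈ K ∧ ∀ w ∈ K, ‖(d - (1 / α) • p) - a‖ ≤ ‖(d - (1 / α) • p) - w‖)
    (hb : b ∈ K ∧ ∀ w ∈ K, ‖(e - (1 / α) • q) - b‖ ≤ ‖(e - (1 / α) • q) - w‖)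
    (hpos : ⟪a - b, s - p⟫ ≤ 0) :
    α * ‖a - b‖ ≤ ‖q - s‖ + α * ‖d - e‖ := by
  have h1 := inner_le_zero_of_nearest hK_conv ha.1 ha.2 hb.1
  have h2 := inner_le_zero_of_nearest hK_conv hb.1 hb.2 ha.1
  have key : α * ‖a - b‖ ^ 2 ≤ ⟪a - b, q - s⟫ + α * ⟪a - b, d - e⟫ := by
    have hid : α * ‖a - b‖ ^ 2 = ⟪a - b, q - s⟫ + α * ⟪a - b, d - e⟫ + ⟪a - b, s - p⟫
        + α * (⟪(d - (1 / α) • p) - a, b - a⟫ + ⟪(e - (1 / α) • q) - b, a - b⟫) := by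
      rw [← real_inner_self_eq_norm_sq, 
        real_inner_comm (b - a), real_inner_comm (a - b) (e - (1 / α) • q - b)]
      simp only [inner_sub_left, inner_sub_right, real_inner_smul_right, real_inner_comm a b]
      field_simp
      ring
    have := mul_nonpos_of_nonneg_of_nonpos hα.le (add_nonpos h1 h2)
    linarith
  have c1 := real_inner_le_norm (a - b) (q - s)
  have c2 := mul_le_mul_of_nonneg_left (real_inner_le_norm (a - b) (d - e)) hα.le
  rcases (norm_nonneg (a - b)).eq_or_lt with h0 | h0
  · rw [← h0, mul_zero]
    positivity
  · refine le_of_mul_le_mul_left ?_ h0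
    linarith
end

section
/- Let V be a real Hilbert space and B : V × V → ℝ a bilinear form that is bounded (|B(v,w)| ≤ M‖v‖‖w‖) and coercive (B(v,v) ≥ c‖v‖² with c > 0). Let (V_k)_{k≥0} be a nondecreasing sequence of closed subspaces of V and V_∞ the norm closure of ⋃_k V_k. Let ℓ_k (k ≥ 0) and ℓ be bounded linear functionals on V with ‖ℓ_k − ℓ‖ → 0 in operator norm. Let y_k ∈ V_k be the unique element with B(y_k, v) = ℓ_k(v) for all v ∈ V_k, and y ∈ V_∞ the unique element with B(y, v) = ℓ(v) for all v ∈ V_∞ (both exist and are unique by Lax–Milgram). Then ‖y_k − y‖_V → 0 as k → ∞. -/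
open Filter

/-! Céa's lemma with a consistency error: testing the difference of the two Galerkin equations
with `yk - w`, for an arbitrary `w` in the discrete space, coercivity gives
`c * ‖yk - w‖ ≤ ‖ℓk - ℓ‖ + M * ‖y - w‖` (`galerkin_estimate`). By density of the union, `y` is
approximated to any accuracy by some `w` in some `Vk n`; by monotonicity this one `w` is admissible
for all `k ≥ n`, and the term `‖ℓk - ℓ‖` tends to zero. -/

/-- Quasi-optimality of a Galerkin solution `u` on `W`, whose right-hand side `f` may differ from
the right-hand side `g` of the exact solution `y`. -/
lemma galerkin_estimate
    {V : Type*} [NormedAddCommGroup V] [InnerProductSpace ℝ V]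
    (B : V →ₗ[ℝ] V →ₗ[ℝ] ℝ) {M c : ℝ}
    (hBbdd : ∀ v w : V, |B v w| ≤ M * ‖v‖ * ‖w‖)
    (hBcoer : ∀ v : V, c * ‖v‖ ^ 2 ≤ B v v)
    (W : Submodule ℝ V) (f g : V →L[ℝ] ℝ) {u y w : V}
    (hu : u ∈ W) (huf : ∀ v ∈ W, B u v = f v) (hyg : ∀ v ∈ W, B y v = g v) (hw : w ∈ W)
    (hM : 0 ≤ M) :
    c * ‖u - w‖ ≤ ‖f - g‖ + M * ‖y - w‖ := by
  have hd : u - w ∈ W := W.sub_mem hu hw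
  have key : B (u - w) (u - w) = (f - g) (u - w) + B (y - w) (u - w) := by
    have h1 := huf _ hd
    have h2 := hyg _ hd
    rw [map_sub B u w, map_sub B y w, LinearMap.sub_apply, LinearMap.sub_apply,
      ContinuousLinearMap.sub_apply]
    linarith
  have h1 : (f - g) (u - w) ≤ ‖f - g‖ * ‖u - w‖ :=
    (le_abs_self _).trans ((f - g).le_opNorm _)
  have h2 := (le_abs_self _).trans (hBbdd (y - w) (u - w))
  have h3 := hBcoer (u - w)
  rcases (norm_nonneg (u - w)).eq_or_lt with h0 | h0
  · rw [← h0, mul_zero]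
    positivity
  · refine le_of_mul_le_mul_right ?_ h0
    nlinarith

/-- Let `V` be a real Hilbert space, `B` a bounded coercive bilinear form,
`(Vk k)` a nondecreasing sequence of closed subspaces with `Vinf` the submodule whose
underlying set is the norm closure of their union. Let `ℓk k → ℓ` in operator norm, `yk k`
the Galerkin solution in `Vk k` for `ℓk k`, and `y` the solution in `Vinf` for `ℓ`. Then
`‖yk k − y‖ → 0`. -/
theorem stmt11
    {V : Type*} [NormedAddCommGroup V] [InnerProductSpace ℝ V] [CompleteSpace V]
    (B : V →ₗ[ℝ] V →ₗ[ℝ] ℝ) (M c : ℝ) (hM : 0 < M) (hc : 0 < c)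
    (hBbdd : ∀ v w : V, |B v w| ≤ M * ‖v‖ * ‖w‖)
    (hBcoer : ∀ v : V, c * ‖v‖ ^ 2 ≤ B v v)
    (Vk : ℕ → Submodule ℝ V)
    (hVcl : ∀ k, IsClosed (Vk k : Set V))
    (hVmono : ∀ k, Vk k ≤ Vk (k + 1))
    (Vinf : Submodule ℝ V)
    (hVinf : (Vinf : Set V) = closure (⋃ k, (Vk k : Set V)))
    (ℓk : ℕ → V →L[ℝ] ℝ) (ℓ : V →L[ℝ] ℝ)
    (hℓ : Tendsto (fun k => ‖ℓk k - ℓ‖) atTop (nhds 0))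
    (yk : ℕ → V)
    (hyk : ∀ k, yk k ∈ Vk k ∧ ∀ v ∈ Vk k, B (yk k) v = ℓk k v)
    (y : V) (hy : y ∈ Vinf ∧ ∀ v ∈ Vinf, B y v = ℓ v) :
    Tendsto (fun k => ‖yk k - y‖) atTop (nhds 0) := by
  have hmono : Monotone Vk := monotone_nat_of_le_succ hVmono
  have hsub : ∀ k, Vk k ≤ Vinf := fun k v hv => by
    have : v ∈ (Vinf : Set V) := hVinf ▸ subset_closure (Set.mem_iUnion.2 ⟨k, hv⟩)
    exact this
  have hycl : y ∈ closure (⋃ k, (Vk k : Set V)) := hVinf ▸ hy.1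
  rw [Metric.tendsto_atTop]
  intro ε hε
  have hMc : 0 < M + c := by positivity
  obtain ⟨w, hwU, hwy⟩ := Metric.mem_closure_iff.1 hycl (c * ε / 2 / (M + c)) (by positivity)
  obtain ⟨n, hwn⟩ := Set.mem_iUnion.1 hwU
  rw [dist_eq_norm, lt_div_iff₀ hMc] at hwy
  obtain ⟨N, hN⟩ := Metric.tendsto_atTop.1 hℓ (c * ε / 2) (by positivity)
  refine ⟨max n N, fun k hk => ?_⟩
  have hℓk := hN k (le_of_max_le_right hk)
  rw [Real.dist_0_eq_abs, abs_norm] at hℓk ⊢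
  have hest := galerkin_estimate B hBbdd hBcoer (Vk k) (ℓk k) ℓ (hyk k).1 (hyk k).2
    (fun v hv => hy.2 v (hsub k hv)) (hmono (le_of_max_le_left hk) hwn) hM.le
  have htri : ‖yk k - y‖ ≤ ‖yk k - w‖ + ‖y - w‖ := by
    rw [norm_sub_rev y w]
    exact norm_sub_le_norm_sub_add_norm_sub _ _ _
  refine lt_of_mul_lt_mul_left ?_ hc.le
  have := mul_le_mul_of_nonneg_left htri hc.le
  linarith
end

section
/- In the multilevel abstract optimal control setup, suppose u_k ∈ U_k^{ad} for each k and ‖u_k − u_∞‖_H → 0 for some u_∞ ∈ U_∞^{ad}. Then ‖y_k(u_k) − y_∞(u_∞)‖_V → 0 and J_k(u_k) → J_∞(u_∞) as k → ∞. -/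
/-!
A Strang–Céa argument. For `φ ∈ V_k ⊆ V_∞`, subtracting the two variational equations gives
`B (y_k(u_k) − y_∞(u_∞)) φ = ⟪u_k − u_∞, ι φ⟫`. Testing with `φ = y_k(u_k) − v` for an arbitrary
`v ∈ V_k` and using coercivity yields (`cea_perturbed`)
`‖y_k(u_k) − y_∞(u_∞)‖ ≤ (‖ι‖ / c) ‖u_k − u_∞‖ + (1 + M / c) ‖y_∞(u_∞) − v‖`.
Since `y_∞(u_∞)` lies in the closure of the increasing union of the `V_k`, a single `v` within any
prescribed distance of it belongs to all `V_k` with `k` large, so the states converge. The costs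
then converge because the cost is a continuous function of state and control.
-/

open Filter
open scoped RealInnerProductSpace

/-- Quasi-best approximation with perturbed data: `y` solves the Galerkin problem on `S` with
right-hand side `g`, while `z` satisfies the equation on `S` with right-hand side `h` but need not
lie in `S` itself. -/
lemma cea_perturbed
    {H : Type*} [NormedAddCommGroup H] [InnerProductSpace ℝ H]
    {V : Type*} [NormedAddCommGroup V] [InnerProductSpace ℝ V]
    (ι : V →L[ℝ] H) (B : V →ₗ[ℝ] V →ₗ[ℝ] ℝ) {M c : ℝ} (hc : 0 < c)
    (hBbdd : ∀ v w : V, |B v w| ≤ M * ‖v‖ * ‖w‖)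
    (hBcoer : ∀ v : V, c * ‖v‖ ^ 2 ≤ B v v)
    {S : Submodule ℝ V} {y z v : V} {g h : H} (hy : y ∈ S) (hv : v ∈ S)
    (hyg : ∀ φ ∈ S, B y φ = ⟪g, ι φ⟫) (hzh : ∀ φ ∈ S, B z φ = ⟪h, ι φ⟫) :
    ‖y - z‖ ≤ ‖ι‖ / c * ‖g - h‖ + (1 + M / c) * ‖z - v‖ := by
  have hd : y - v ∈ S := S.sub_mem hy hv
  have hsplit : B (y - v) (y - v) = ⟪g - h, ι (y - v)⟫ + B (z - v) (y - v) := by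
    rw [inner_sub_left, ← hyg _ hd, ← hzh _ hd]
    simp only [map_sub, LinearMap.sub_apply]
    ring
  have hdata : ⟪g - h, ι (y - v)⟫ ≤ ‖g - h‖ * (‖ι‖ * ‖y - v‖) :=
    (real_inner_le_norm _ _).trans (by gcongr; exact ι.le_opNorm _)
  have happrox : B (z - v) (y - v) ≤ M * ‖z - v‖ * ‖y - v‖ :=
    (le_abs_self _).trans (hBbdd _ _)
  have hmul : c * ‖y - v‖ * ‖y - v‖ ≤ (‖ι‖ * ‖g - h‖ + M * ‖z - v‖) * ‖y - v‖ := by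
    have := hBcoer (y - v)
    nlinarith
  have hbound : ‖y - v‖ ≤ (‖ι‖ * ‖g - h‖ + M * ‖z - v‖) / c := by
    rw [le_div_iff₀' hc]
    rcases (norm_nonneg (y - v)).eq_or_lt with h0 | hpos
    · -- If `y = v`, the factor `‖y - v‖` cannot be cancelled; the bound `M ‖z - v‖ ≥ 0` follows
      -- from boundedness of `B` on the diagonal.
      have hMn : 0 ≤ M * ‖z - v‖ := by
        rcases (norm_nonneg (z - v)).eq_or_lt with h1 | h1
        · simp [← h1]
        · exact nonneg_of_mul_nonneg_left ((abs_nonneg _).trans (hBbdd (z - v) (z - v))) h1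
      rw [← h0, mul_zero]
      positivity
    · exact le_of_mul_le_mul_right hmul hpos
  calc ‖y - z‖ = ‖(y - v) - (z - v)‖ := by rw [sub_sub_sub_cancel_right]
    _ ≤ ‖y - v‖ + ‖z - v‖ := norm_sub_le _ _
    _ ≤ (‖ι‖ * ‖g - h‖ + M * ‖z - v‖) / c + ‖z - v‖ := by gcongr
    _ = ‖ι‖ / c * ‖g - h‖ + (1 + M / c) * ‖z - v‖ := by ring

/-- In the multilevel abstract optimal control setup, if `u k ∈ U_k^{ad}` for
each `k` and `‖u k − u∞‖ → 0` with `u∞ ∈ U_∞^{ad}`, then the discrete states converge,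
`‖y_k(u k) − y_∞(u∞)‖ → 0`, and the discrete cost values converge, `J_k(u k) → J_∞(u∞)`. -/
theorem stmt12
    {H : Type*} [NormedAddCommGroup H] [InnerProductSpace ℝ H] [CompleteSpace H]
    {W : Type*} [NormedAddCommGroup W] [InnerProductSpace ℝ W] [CompleteSpace W]
    {V : Type*} [NormedAddCommGroup V] [InnerProductSpace ℝ V] [CompleteSpace V]
    (ι : V →L[ℝ] H) (C : V →L[ℝ] W)
    (B : V →ₗ[ℝ] V →ₗ[ℝ] ℝ) (M c : ℝ) (hM : 0 < M) (hc : 0 < c)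
    (hBbdd : ∀ v w : V, |B v w| ≤ M * ‖v‖ * ‖w‖)
    (hBcoer : ∀ v : V, c * ‖v‖ ^ 2 ≤ B v v)
    (f : H) (yd : W) (ud : H) (α : ℝ) (hα : 0 < α)
    (Uad : Set H) (hUad_ne : Uad.Nonempty) (hUad_cl : IsClosed Uad)
    (hUad_conv : Convex ℝ Uad)
    (Vk : ℕ → Submodule ℝ V)
    (hVcl : ∀ k, IsClosed (Vk k : Set V)) (hVmono : ∀ k, Vk k ≤ Vk (k + 1))
    (Uk : ℕ → Submodule ℝ H)
    (hUcl : ∀ k, IsClosed (Uk k : Set H)) (hUmono : ∀ k, Uk k ≤ Uk (k + 1))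
    (hU0ad_ne : ((Uk 0 : Set H) ∩ Uad).Nonempty)
    (yk : ℕ → H → V)
    (hyk : ∀ (k : ℕ) (u : H), yk k u ∈ Vk k ∧ ∀ φ ∈ Vk k, B (yk k u) φ = ⟪f + u, ι φ⟫)
    (Jk : ℕ → H → ℝ)
    (hJk : ∀ (k : ℕ) (u : H),
      Jk k u = (1 / 2) * ‖C (yk k u) - yd‖ ^ 2 + (α / 2) * ‖u - ud‖ ^ 2)
    (Vinf : Submodule ℝ V)
    (hVinf : (Vinf : Set V) = closure (⋃ k, (Vk k : Set V)))
    (Uadinf : Set H)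
    (hUadinf : Uadinf = closure (⋃ k, ((Uk k : Set H) ∩ Uad)))
    (yinf : H → V)
    (hyinf : ∀ u : H, yinf u ∈ Vinf ∧ ∀ φ ∈ Vinf, B (yinf u) φ = ⟪f + u, ι φ⟫)
    (Jinf : H → ℝ)
    (hJinf : ∀ u : H,
      Jinf u = (1 / 2) * ‖C (yinf u) - yd‖ ^ 2 + (α / 2) * ‖u - ud‖ ^ 2)
    (u : ℕ → H) (hu : ∀ k, u k ∈ (Uk k : Set H) ∩ Uad)
    (uinf : H) (huinf : uinf ∈ Uadinf)
    (hconv : Tendsto (fun k => ‖u k - uinf‖) atTop (nhds 0)) :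
    Tendsto (fun k => ‖yk k (u k) - yinf uinf‖) atTop (nhds 0) ∧
      Tendsto (fun k => Jk k (u k)) atTop (nhds (Jinf uinf)) := by
  have hmono : Monotone Vk := monotone_nat_of_le_succ hVmono
  have hsub : ∀ k, Vk k ≤ Vinf := fun k x hx => by
    have : x ∈ (Vinf : Set V) := by
      rw [hVinf]
      exact subset_closure (Set.mem_iUnion.2 ⟨k, hx⟩)
    exact this
  have hstate : Tendsto (fun k => ‖yk k (u k) - yinf uinf‖) atTop (nhds 0) := by
    have hK : 0 < 1 + M / c := by positivity
    have hdata : Tendsto (fun k => ‖ι‖ / c * ‖u k - uinf‖) atTop (nhds 0) := by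
      simpa using hconv.const_mul (‖ι‖ / c)
    rw [Metric.tendsto_atTop]
    intro ε hε
    have hmem : yinf uinf ∈ closure (⋃ k, (Vk k : Set V)) := hVinf ▸ (hyinf uinf).1
    obtain ⟨v, hv, hdist⟩ := Metric.mem_closure_iff.1 hmem (ε / 2 / (1 + M / c)) (by positivity)
    obtain ⟨N, hvN⟩ := Set.mem_iUnion.1 hv
    obtain ⟨N', hN'⟩ := eventually_atTop.1 (hdata.eventually_lt_const (half_pos hε))
    refine ⟨max N N', fun k hk => ?_⟩
    have hcea := cea_perturbed ι B hc hBbdd hBcoer (hyk k (u k)).1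
      (hmono (le_of_max_le_left hk) hvN) (hyk k (u k)).2
      (fun φ hφ => (hyinf uinf).2 φ (hsub k hφ))
    rw [add_sub_add_left_eq_sub] at hcea
    have h1 := hN' k (le_of_max_le_right hk)
    rw [dist_eq_norm, lt_div_iff₀' hK] at hdist
    rw [Real.dist_0_eq_abs, abs_norm]
    linarith
  refine ⟨hstate, ?_⟩
  have hy := tendsto_iff_norm_sub_tendsto_zero.2 hstate
  have hu' := tendsto_iff_norm_sub_tendsto_zero.2 hconv
  simp only [hJk, hJinf]
  exact (((((C.continuous.tendsto _).comp hy).sub_const yd).norm.pow 2).const_mul _).add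
    (((hu'.sub_const ud).norm.pow 2).const_mul _)
end

section
/- In the multilevel abstract optimal control setup, the discrete optimal controls converge weakly in H to the limiting optimal control and the discrete optimal states converge weakly in V to the limiting optimal state: ⟨u_k*, w⟩_H → ⟨u_∞*, w⟩_H for every w ∈ H, and ⟨y_k*, v⟩_V → ⟨y_∞*, v⟩_V for every v ∈ V, as k → ∞. -/
/-!
The convergence is in fact strong, which is what is proved, and no weak compactness is needed.

For a closed subspace `S` with state map `y`, the Lax-Milgram theorem gives, for each control `u`,
an adjoint state `p ∈ S` with `B φ p = ⟪C (y u) - yd, C φ⟫` on `S`, and the cost is quadratic with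
gradient `ι p + α (u - ud)` at `u` (`cost_expansion`). Let `g` be the gradient of the limiting cost
at `uinfstar`; then `⟪v - uinfstar, g⟫ ≥ 0` on the convex set `Uadinf` (`variational_inequality`),
in particular for `v = ustar k`.

Choose admissible `a k` in the `k`-th discrete set with `a k → uinfstar`. A perturbed Céa estimate
(`galerkin_tendsto`), applied to the state equation and then to the adjoint equation, shows that the
discrete gradients `gk k` at `a k` converge to `g` in norm. Expanding the `k`-th cost around `a k`
and using the minimality of `ustar k` gives
`α / 2 * ‖ustar k - a k‖ ^ 2 ≤ ‖gk k - g‖ * ‖ustar k - a k‖ + ‖g‖ * ‖a k - uinfstar‖`,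
so `ustar k → uinfstar`. The states converge by another application of `galerkin_tendsto`.
-/

open Filter
open scoped RealInnerProductSpace

/-- An error `e` satisfying `c e² ≤ a e + b` with `a, b → 0` tends to zero. -/
lemma tendsto_zero_of_quadratic {e a b : ℕ → ℝ} {c : ℝ} (hc : 0 < c)
    (ha : Tendsto a atTop (nhds 0)) (hb : Tendsto b atTop (nhds 0))
    (h : ∀ k, c * e k ^ 2 ≤ a k * e k + b k) : Tendsto e atTop (nhds 0) := by
  have hlim : Tendsto (fun k => (a k / c) ^ 2 + 2 / c * b k) atTop (nhds 0) := by
    simpa using ((ha.div_const c).pow 2).add (hb.const_mul (2 / c))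
  have hsq : Tendsto (fun k => e k ^ 2) atTop (nhds 0) := by
    refine squeeze_zero (fun k => sq_nonneg _) (fun k => ?_) hlim
    have h1 : e k ^ 2 ≤ a k / c * e k + b k / c := by
      rw [div_mul_eq_mul_div, ← add_div, le_div_iff₀ hc]
      linarith [h k]
    have h2 : 2 / c * b k = 2 * (b k / c) := by ring
    -- Young's inequality absorbs the linear term.
    nlinarith [sq_nonneg (a k / c - e k)]
  have := hsq.sqrt
  simp only [Real.sqrt_sq_eq_abs, Real.sqrt_zero] at this
  exact (tendsto_zero_iff_abs_tendsto_zero e).2 this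

/-- A point of the closure of an increasing union of nonempty sets is a limit of points taken
from the successive sets. -/
lemma exists_approx {X : Type*} [PseudoMetricSpace X] (S : ℕ → Set X) (hS : Monotone S)
    (hne : (S 0).Nonempty) {x : X} (hx : x ∈ closure (⋃ k, S k)) :
    ∃ a : ℕ → X, (∀ k, a k ∈ S k) ∧ Tendsto a atTop (nhds x) := by
  have hne' : ∀ k, (S k).Nonempty := fun k => hne.mono (hS (Nat.zero_le k))
  have hex : ∀ k : ℕ, ∃ z ∈ S k, dist x z < Metric.infDist x (S k) + 1 / ((k : ℝ) + 1) :=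
    fun k => (Metric.infDist_lt_iff (hne' k)).1 (lt_add_of_pos_right _ (by positivity))
  choose a ha hd using hex
  refine ⟨a, ha, ?_⟩
  have hinf : Tendsto (fun k => Metric.infDist x (S k)) atTop (nhds 0) := by
    rw [Metric.tendsto_atTop]
    intro ε hε
    obtain ⟨z, hz, hzx⟩ := Metric.mem_closure_iff.1 hx ε hε
    obtain ⟨n, hn⟩ := Set.mem_iUnion.1 hz
    refine ⟨n, fun k hk => ?_⟩
    rw [Real.dist_eq, sub_zero, abs_of_nonneg Metric.infDist_nonneg]
    exact (Metric.infDist_le_dist_of_mem (hS hk hn)).trans_lt hzx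
  rw [tendsto_iff_dist_tendsto_zero]
  refine squeeze_zero (fun _ => dist_nonneg) (fun k => ?_)
    (by simpa using hinf.add tendsto_one_div_add_atTop_nhds_zero_nat)
  rw [dist_comm]
  simpa using (hd k).le

section Forms

variable {V : Type*} [NormedAddCommGroup V] [InnerProductSpace ℝ V]

/-- Perturbed Céa estimate: Galerkin solutions with right-hand sides `ℓk k` tending to `ℓ` in dual
norm converge in norm to the solution in the limiting subspace. -/
lemma galerkin_tendsto (A : V →ₗ[ℝ] V →ₗ[ℝ] ℝ) {M c : ℝ} (hc : 0 < c)
    (hbdd : ∀ v w : V, |A v w| ≤ M * ‖v‖ * ‖w‖) (hcoer : ∀ v : V, c * ‖v‖ ^ 2 ≤ A v v)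
    (S : ℕ → Submodule ℝ V) (hS : Monotone S) (T : Submodule ℝ V)
    (hT : (T : Set V) = closure (⋃ k, (S k : Set V)))
    (ℓk : ℕ → V → ℝ) (ℓ : V → ℝ) (ε : ℕ → ℝ) (hε : Tendsto ε atTop (nhds 0))
    (hℓ : ∀ k φ, |ℓ φ - ℓk k φ| ≤ ε k * ‖φ‖)
    (z : ℕ → V) (hz : ∀ k, z k ∈ S k ∧ ∀ φ ∈ S k, A (z k) φ = ℓk k φ)
    (w : V) (hw : w ∈ T ∧ ∀ φ ∈ T, A w φ = ℓ φ) :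
    Tendsto z atTop (nhds w) := by
  have hST : ∀ k, S k ≤ T := fun k v hv => by
    have : v ∈ (T : Set V) := hT ▸ subset_closure (Set.mem_iUnion.2 ⟨k, hv⟩)
    exact this
  obtain ⟨a, ha, hlim⟩ := exists_approx (fun k => (S k : Set V)) (fun i j h => hS h)
    ⟨0, (S 0).zero_mem⟩ (x := w) (hT ▸ hw.1)
  have hd : Tendsto (fun k => ‖w - a k‖) atTop (nhds 0) := by
    simpa using (tendsto_const_nhds.sub hlim : Tendsto (fun k => w - a k) _ (nhds (w - w))).norm
  have key : Tendsto (fun k => ‖z k - w‖) atTop (nhds 0) := by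
    refine tendsto_zero_of_quadratic (a := fun k => M * ‖w - a k‖ + ε k)
      (b := fun k => ε k * ‖w - a k‖) hc (by simpa using (hd.const_mul M).add hε)
      (by simpa using hε.mul hd) (fun k => ?_)
    rw [norm_sub_rev]
    have hmem : a k - z k ∈ S k := (S k).sub_mem (ha k) (hz k).1
    have h1 : A (w - z k) (w - z k)
        = A (w - z k) (w - a k) + (ℓ (a k - z k) - ℓk k (a k - z k)) := by
      rw [← hw.2 _ (hST k hmem), ← (hz k).2 _ hmem]
      simp only [map_sub, LinearMap.sub_apply]
      ring
    have h2 := (le_abs_self _).trans (hbdd (w - z k) (w - a k))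
    have h3 := (le_abs_self _).trans (hℓ k (a k - z k))
    have hε0 : 0 ≤ ε k * ‖a k - z k‖ := (abs_nonneg _).trans (hℓ k _)
    have h4 : ε k * ‖a k - z k‖ ≤ ε k * (‖w - z k‖ + ‖w - a k‖) := by
      rcases (norm_nonneg (a k - z k)).eq_or_lt with h0 | h0
      · -- When `a k = z k` only the sign of `ε k` matters; `hℓ` at `w - z k` gives it if `w ≠ z k`.
        rw [← h0, mul_zero]
        by_cases hv : w - z k = 0
        · have : w - a k = 0 := by
            have : a k = z k := sub_eq_zero.1 (norm_eq_zero.1 h0.symm)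
            rw [this, hv]
          simp [hv, this]
        · have := (abs_nonneg _).trans (hℓ k (w - z k))
          have hpos := norm_pos_iff.2 hv
          have : 0 ≤ ε k := nonneg_of_mul_nonneg_left this hpos
          positivity
      · refine mul_le_mul_of_nonneg_left ?_ (nonneg_of_mul_nonneg_left hε0 h0)
        have : a k - z k = (w - z k) - (w - a k) := by abel
        rw [this]
        exact norm_sub_le _ _
    have h5 := hcoer (w - z k)
    nlinarith
  exact tendsto_iff_norm_sub_tendsto_zero.2 key

/-- Lax-Milgram for the adjoint equation on a closed subspace. -/
lemma exists_adjoint [CompleteSpace V] (B : V →ₗ[ℝ] V →ₗ[ℝ] ℝ) {M c : ℝ} (hc : 0 < c)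
    (hbdd : ∀ v w : V, |B v w| ≤ M * ‖v‖ * ‖w‖) (hcoer : ∀ v : V, c * ‖v‖ ^ 2 ≤ B v v)
    (S : Submodule ℝ V) (hS : IsClosed (S : Set V)) (ℓ : V →L[ℝ] ℝ) :
    ∃ p ∈ S, ∀ φ ∈ S, B φ p = ℓ φ := by
  have : CompleteSpace S := hS.completeSpace_coe
  let A : S →L[ℝ] S →L[ℝ] ℝ :=
    LinearMap.mkContinuous₂ (B.flip.domRestrict₁₂ S S) M (fun v w => by
      have := hbdd w v
      simp only [LinearMap.domRestrict₁₂_apply, LinearMap.flip_apply, Real.norm_eq_abs,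
        Submodule.coe_norm]
      linarith)
  have hA : ∀ v w : S, A v w = B w v := fun v w => rfl
  have hAc : IsCoercive A := ⟨c, hc, fun v => by
    rw [hA]
    have := hcoer v
    simp only [Submodule.coe_norm]
    linarith⟩
  let r : S := (InnerProductSpace.toDual ℝ S).symm (ℓ.comp S.subtypeL)
  refine ⟨(hAc.continuousLinearEquivOfBilin.symm r : S), Subtype.property _, fun φ hφ => ?_⟩
  have h := hAc.continuousLinearEquivOfBilin_apply
    (hAc.continuousLinearEquivOfBilin.symm r) ⟨φ, hφ⟩
  rw [ContinuousLinearEquiv.apply_symm_apply, hA] at h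
  rw [← h]
  simp [r, InnerProductSpace.toDual_symm_apply]

variable {H : Type*} [NormedAddCommGroup H] [InnerProductSpace ℝ H]
variable {W : Type*} [NormedAddCommGroup W] [InnerProductSpace ℝ W]

/-- Exact second-order expansion of the cost around `u`, where `p` is the adjoint state at `u`. -/
lemma cost_expansion (ι : V →L[ℝ] H) (C : V →L[ℝ] W) (B : V →ₗ[ℝ] V →ₗ[ℝ] ℝ)
    (f : H) (yd : W) (ud : H) (α : ℝ) (S : Submodule ℝ V) (y : H → V)
    (hy : ∀ u : H, y u ∈ S ∧ ∀ φ ∈ S, B (y u) φ = ⟪f + u, ι φ⟫) (J : H → ℝ)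
    (hJ : ∀ u : H, J u = (1 / 2) * ‖C (y u) - yd‖ ^ 2 + (α / 2) * ‖u - ud‖ ^ 2)
    (u : H) (p : V) (hpS : p ∈ S) (hp : ∀ φ ∈ S, B φ p = ⟪C (y u) - yd, C φ⟫) (v : H) :
    J v = J u + ⟪v - u, ι p + α • (u - ud)⟫ + (1 / 2) * ‖C (y v - y u)‖ ^ 2
      + (α / 2) * ‖v - u‖ ^ 2 := by
  have h1 : ⟪C (y u) - yd, C (y v - y u)⟫ = ⟪v - u, ι p⟫ := by
    rw [← hp _ (S.sub_mem (hy v).1 (hy u).1), map_sub, LinearMap.sub_apply, (hy v).2 p hpS,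
      (hy u).2 p hpS, ← inner_sub_left]
    congr 1
    abel
  have e1 : C (y v) - yd = (C (y u) - yd) + C (y v - y u) := by
    rw [map_sub]; abel
  have e2 : v - ud = (u - ud) + (v - u) := by abel
  rw [hJ v, hJ u, e1, e2, norm_add_sq_real, norm_add_sq_real, h1, inner_add_right,
    inner_smul_right, real_inner_comm (v - u) (u - ud)]
  ring

/-- Lipschitz continuity of the state map. -/
lemma state_lipschitz (ι : V →L[ℝ] H) (B : V →ₗ[ℝ] V →ₗ[ℝ] ℝ) {c : ℝ} (hc : 0 < c)
    (hcoer : ∀ v : V, c * ‖v‖ ^ 2 ≤ B v v) (f : H) (S : Submodule ℝ V) (y : H → V)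
    (hy : ∀ u : H, y u ∈ S ∧ ∀ φ ∈ S, B (y u) φ = ⟪f + u, ι φ⟫) (u v : H) :
    ‖y v - y u‖ ≤ ‖ι‖ / c * ‖v - u‖ := by
  have hmem := S.sub_mem (hy v).1 (hy u).1
  have h1 : B (y v - y u) (y v - y u) = ⟪v - u, ι (y v - y u)⟫ := by
    rw [map_sub B, LinearMap.sub_apply, (hy v).2 _ hmem, (hy u).2 _ hmem, ← inner_sub_left]
    congr 1
    abel
  have h2 := real_inner_le_norm (v - u) (ι (y v - y u))
  have h3 := mul_le_mul_of_nonneg_left (ι.le_opNorm (y v - y u)) (norm_nonneg (v - u))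
  have h4 := hcoer (y v - y u)
  rw [div_mul_eq_mul_div, le_div_iff₀ hc]
  rcases (norm_nonneg (y v - y u)).eq_or_lt with h0 | h0
  · rw [← h0]
    simp only [zero_mul]
    positivity
  · refine le_of_mul_le_mul_right ?_ h0
    nlinarith

/-- First-order optimality condition at a minimizer over a convex set. -/
lemma variational_inequality (ι : V →L[ℝ] H) (C : V →L[ℝ] W) (B : V →ₗ[ℝ] V →ₗ[ℝ] ℝ) {c : ℝ}
    (hc : 0 < c) (hcoer : ∀ v : V, c * ‖v‖ ^ 2 ≤ B v v)
    (f : H) (yd : W) (ud : H) (α : ℝ) (S : Submodule ℝ V) (y : H → V)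
    (hy : ∀ u : H, y u ∈ S ∧ ∀ φ ∈ S, B (y u) φ = ⟪f + u, ι φ⟫) (J : H → ℝ)
    (hJ : ∀ u : H, J u = (1 / 2) * ‖C (y u) - yd‖ ^ 2 + (α / 2) * ‖u - ud‖ ^ 2)
    (K : Set H) (hK : Convex ℝ K) (u : H) (hu : u ∈ K) (hmin : ∀ v ∈ K, J u ≤ J v)
    (p : V) (hpS : p ∈ S) (hp : ∀ φ ∈ S, B φ p = ⟪C (y u) - yd, C φ⟫) (v : H) (hv : v ∈ K) :
    0 ≤ ⟪v - u, ι p + α • (u - ud)⟫ := by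
  set g := ι p + α • (u - ud)
  set D := (1 / 2) * (‖C‖ * (‖ι‖ / c)) ^ 2 * ‖v - u‖ ^ 2 + (α / 2) * ‖v - u‖ ^ 2
  have hmain : ∀ t : ℝ, 0 < t → t ≤ 1 → 0 ≤ ⟪v - u, g⟫ + t * D := by
    intro t ht ht1
    have hmem : u + t • (v - u) ∈ K := hK.add_smul_sub_mem hu hv ⟨ht.le, ht1⟩
    have h1 := hmin _ hmem
    rw [cost_expansion ι C B f yd ud α S y hy J hJ u p hpS hp (u + t • (v - u))] at h1
    have h2 : ‖C (y (u + t • (v - u)) - y u)‖ ≤ ‖C‖ * (‖ι‖ / c) * (t * ‖v - u‖) := by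
      have h3 := state_lipschitz ι B hc hcoer f S y hy u (u + t • (v - u))
      rw [add_sub_cancel_left, norm_smul, Real.norm_of_nonneg ht.le] at h3
      calc _ ≤ ‖C‖ * ‖y (u + t • (v - u)) - y u‖ := C.le_opNorm _
        _ ≤ ‖C‖ * (‖ι‖ / c * (t * ‖v - u‖)) := by gcongr
        _ = _ := by ring
    have h4 := pow_le_pow_left₀ (norm_nonneg _) h2 2
    rw [add_sub_cancel_left, norm_smul, Real.norm_of_nonneg ht.le, real_inner_smul_left] at h1
    have h5 : 0 ≤ t * (⟪v - u, g⟫ + t * D) := by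
      simp only [D]
      linarith
    exact nonneg_of_mul_nonneg_right h5 ht
  have hlim : Tendsto (fun t : ℝ => ⟪v - u, g⟫ + t * D) (nhdsWithin 0 (Set.Ioi 0))
      (nhds ⟪v - u, g⟫) := by
    have : Continuous (fun t : ℝ => ⟪v - u, g⟫ + t * D) := by fun_prop
    simpa using (this.tendsto 0).mono_left nhdsWithin_le_nhds
  refine ge_of_tendsto hlim ?_
  filter_upwards [Ioc_mem_nhdsGT (zero_lt_one' ℝ)] with t ht using hmain t ht.1 ht.2

end Forms

/-- In the multilevel abstract optimal control setup, the discrete optimal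
controls converge weakly in `H` to the limiting optimal control and the discrete optimal
states converge weakly in `V` to the limiting optimal state. -/
theorem stmt14
    {H : Type*} [NormedAddCommGroup H] [InnerProductSpace ℝ H] [CompleteSpace H]
    {W : Type*} [NormedAddCommGroup W] [InnerProductSpace ℝ W] [CompleteSpace W]
    {V : Type*} [NormedAddCommGroup V] [InnerProductSpace ℝ V] [CompleteSpace V]
    (ι : V →L[ℝ] H) (C : V →L[ℝ] W)
    (B : V →ₗ[ℝ] V →ₗ[ℝ] ℝ) (M c : ℝ) (hM : 0 < M) (hc : 0 < c)
    (hBbdd : ∀ v w : V, |B v w| ≤ M * ‖v‖ * ‖w‖)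
    (hBcoer : ∀ v : V, c * ‖v‖ ^ 2 ≤ B v v)
    (f : H) (yd : W) (ud : H) (α : ℝ) (hα : 0 < α)
    (Uad : Set H) (hUad_ne : Uad.Nonempty) (hUad_cl : IsClosed Uad)
    (hUad_conv : Convex ℝ Uad)
    (Vk : ℕ → Submodule ℝ V)
    (hVcl : ∀ k, IsClosed (Vk k : Set V)) (hVmono : ∀ k, Vk k ≤ Vk (k + 1))
    (Uk : ℕ → Submodule ℝ H)
    (hUcl : ∀ k, IsClosed (Uk k : Set H)) (hUmono : ∀ k, Uk k ≤ Uk (k + 1))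
    (hU0ad_ne : ((Uk 0 : Set H) ∩ Uad).Nonempty)
    (yk : ℕ → H → V)
    (hyk : ∀ (k : ℕ) (u : H), yk k u ∈ Vk k ∧ ∀ φ ∈ Vk k, B (yk k u) φ = ⟪f + u, ι φ⟫)
    (Jk : ℕ → H → ℝ)
    (hJk : ∀ (k : ℕ) (u : H),
      Jk k u = (1 / 2) * ‖C (yk k u) - yd‖ ^ 2 + (α / 2) * ‖u - ud‖ ^ 2)
    (Vinf : Submodule ℝ V)
    (hVinf : (Vinf : Set V) = closure (⋃ k, (Vk k : Set V)))
    (Uadinf : Set H)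
    (hUadinf : Uadinf = closure (⋃ k, ((Uk k : Set H) ∩ Uad)))
    (yinf : H → V)
    (hyinf : ∀ u : H, yinf u ∈ Vinf ∧ ∀ φ ∈ Vinf, B (yinf u) φ = ⟪f + u, ι φ⟫)
    (Jinf : H → ℝ)
    (hJinf : ∀ u : H,
      Jinf u = (1 / 2) * ‖C (yinf u) - yd‖ ^ 2 + (α / 2) * ‖u - ud‖ ^ 2)
    (ustar : ℕ → H)
    (hustar : ∀ k, ustar k ∈ (Uk k : Set H) ∩ Uad ∧
      ∀ u ∈ (Uk k : Set H) ∩ Uad, Jk k (ustar k) ≤ Jk k u)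
    (uinfstar : H)
    (huinfstar : uinfstar ∈ Uadinf ∧ ∀ u ∈ Uadinf, Jinf uinfstar ≤ Jinf u) :
    (∀ w : H, Tendsto (fun k => ⟪ustar k, w⟫) atTop (nhds ⟪uinfstar, w⟫)) ∧
      ∀ v : V, Tendsto (fun k => ⟪yk k (ustar k), v⟫) atTop (nhds ⟪yinf uinfstar, v⟫) := by
  have hVm : Monotone Vk := monotone_nat_of_le_succ hVmono
  have hUm : Monotone (fun k => (Uk k : Set H) ∩ Uad) := fun i j hij =>
    Set.inter_subset_inter_left _ (monotone_nat_of_le_succ hUmono hij)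
  have hVinfcl : IsClosed (Vinf : Set V) := hVinf ▸ isClosed_closure
  have hUconv : Convex ℝ Uadinf := by
    rw [hUadinf]
    exact (hUm.directed_le.convex_iUnion fun k => (Uk k).convex.inter hUad_conv).closure
  have hadm : ∀ k, ustar k ∈ Uadinf := fun k => by
    rw [hUadinf]
    exact subset_closure (Set.mem_iUnion.2 ⟨k, (hustar k).1⟩)
  have hstate : ∀ v : ℕ → H, Tendsto v atTop (nhds uinfstar) →
      Tendsto (fun k => yk k (v k)) atTop (nhds (yinf uinfstar)) := by
    intro v hv
    refine galerkin_tendsto B hc hBbdd hBcoer Vk hVm Vinf hVinf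
      (fun k φ => ⟪f + v k, ι φ⟫) (fun φ => ⟪f + uinfstar, ι φ⟫)
      (fun k => ‖v k - uinfstar‖ * ‖ι‖) ?_ (fun k φ => ?_) _ (fun k => hyk k (v k)) _
      (hyinf uinfstar)
    · simpa using (tendsto_iff_norm_sub_tendsto_zero.1 hv).mul_const ‖ι‖
    · rw [← inner_sub_left, add_sub_add_left_eq_sub, norm_sub_rev, mul_assoc]
      exact (abs_real_inner_le_norm _ _).trans
        (mul_le_mul_of_nonneg_left (ι.le_opNorm φ) (norm_nonneg _))
  obtain ⟨a, ha, halim⟩ := exists_approx _ hUm hU0ad_ne (hUadinf ▸ huinfstar.1)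
  have hya := hstate a halim
  have hex : ∀ (S : Submodule ℝ V), IsClosed (S : Set V) → ∀ w : W,
      ∃ p ∈ S, ∀ φ ∈ S, B φ p = ⟪w, C φ⟫ := fun S hS w => by
    simpa using exists_adjoint B hc hBbdd hBcoer S hS ((innerSL ℝ w).comp C)
  obtain ⟨p, hpS, hp⟩ := hex Vinf hVinfcl (C (yinf uinfstar) - yd)
  choose pk hpkS hpk using fun k => hex (Vk k) (hVcl k) (C (yk k (a k)) - yd)
  have hplim : Tendsto pk atTop (nhds p) := by
    refine galerkin_tendsto B.flip (M := M) hc (fun v w => ?_) hBcoer Vk hVm Vinf hVinf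
      (fun k φ => ⟪C (yk k (a k)) - yd, C φ⟫) (fun φ => ⟪C (yinf uinfstar) - yd, C φ⟫)
      (fun k => ‖C (yk k (a k)) - C (yinf uinfstar)‖ * ‖C‖) ?_ (fun k φ => ?_) _
      (fun k => ⟨hpkS k, hpk k⟩) _ ⟨hpS, hp⟩
    · have := hBbdd w v
      rw [LinearMap.flip_apply]
      linarith
    · have h := (C.continuous.tendsto _).comp hya
      simpa using (tendsto_iff_norm_sub_tendsto_zero.1 h).mul_const ‖C‖
    · rw [← inner_sub_left, sub_sub_sub_cancel_right, norm_sub_rev, mul_assoc]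
      exact (abs_real_inner_le_norm _ _).trans
        (mul_le_mul_of_nonneg_left (C.le_opNorm φ) (norm_nonneg _))
  set g : H := ι p + α • (uinfstar - ud) with hg
  set gk : ℕ → H := fun k => ι (pk k) + α • (a k - ud) with hgk
  have hglim : Tendsto gk atTop (nhds g) :=
    ((ι.continuous.tendsto _).comp hplim).add ((halim.sub_const ud).const_smul α)
  have hvi : ∀ k, 0 ≤ ⟪ustar k - uinfstar, g⟫ := fun k =>
    variational_inequality ι C B hc hBcoer f yd ud α Vinf yinf hyinf Jinf hJinf Uadinf hUconv
      uinfstar huinfstar.1 huinfstar.2 p hpS hp _ (hadm k)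
  have herr : Tendsto (fun k => ‖ustar k - a k‖) atTop (nhds 0) := by
    refine tendsto_zero_of_quadratic (a := fun k => ‖gk k - g‖)
      (b := fun k => ‖a k - uinfstar‖ * ‖g‖) (half_pos hα)
      (tendsto_iff_norm_sub_tendsto_zero.1 hglim)
      (by simpa using (tendsto_iff_norm_sub_tendsto_zero.1 halim).mul_const ‖g‖) (fun k => ?_)
    have h1 := (hustar k).2 _ (ha k)
    rw [cost_expansion ι C B f yd ud α (Vk k) (yk k) (hyk k) (Jk k) (hJk k) (a k) (pk k)
      (hpkS k) (hpk k) (ustar k)] at h1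
    have h2 : ⟪ustar k - a k, gk k⟫ = ⟪ustar k - a k, gk k - g⟫ + ⟪ustar k - uinfstar, g⟫
        - ⟪a k - uinfstar, g⟫ := by
      simp only [inner_sub_left, inner_sub_right]
      ring
    have h3 := neg_le_of_abs_le (abs_real_inner_le_norm (ustar k - a k) (gk k - g))
    have h4 := real_inner_le_norm (a k - uinfstar) g
    have h5 := hvi k
    have h6 := sq_nonneg ‖C (yk k (ustar k) - yk k (a k))‖
    change Jk k (a k) + ⟪ustar k - a k, gk k⟫ + _ + _ ≤ _ at h1
    linarith
  have hulim : Tendsto ustar atTop (nhds uinfstar) := by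
    simpa using (tendsto_zero_iff_norm_tendsto_zero.2 herr).add halim
  exact ⟨fun w => hulim.inner tendsto_const_nhds,
    fun v => (hstate ustar hulim).inner tendsto_const_nhds⟩
end

section
/- In the multilevel abstract optimal control setup, the discrete optimal controls and states converge strongly to the limiting ones: ‖u_k* − u_∞*‖_H → 0 and ‖y_k* − y_∞*‖_V → 0 as k → ∞. -/
/-!
Write `J_k(u) = ½‖A_k u - g_k‖² + (α/2)‖u - u^d‖²`, where `A_k = C T_k` and `T_k` is the linear part
of the affine map `u ↦ y_k(u)`; the coercivity of `B` bounds `‖T_k‖` uniformly in `k`.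
Let `e_k = u_k* - u_∞*` and choose `v_k ∈ U_k^{ad}` with `v_k → u_∞*`. Since `J_k'` is
`α`-strongly monotone, testing the optimality of `u_k*` with `v_k` and that of `u_∞*` with `u_k*`
gives

  `α‖e_k‖² ≤ J_k'(u_k*)(v_k - u_∞*) + (J_∞'(u_∞*) - J_k'(u_∞*)) e_k`.

Hence `e_k → 0` as soon as `J_k'(u_∞*) → J_∞'(u_∞*)` in the dual norm (`tendsto_minimizer`); no weak
compactness is needed.

Besides the convergence `y_k(u) → y_∞(u)` for fixed `u`, which is Céa's lemma
(`norm_sub_le_cea`), the convergence of the derivatives requires `⟨r, C (T_k - T_∞) h⟩ → 0`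
uniformly for `‖h‖ ≤ 1`, where `r = C y_∞(u_∞*) - y^d` is fixed. This is a duality argument: with
`p ∈ V_∞` solving `B(φ, p) = ⟨r, C φ⟩` for all `φ ∈ V_∞`, Galerkin orthogonality gives
`⟨r, C (T_k - T_∞) h⟩ = B((T_k - T_∞) h, p - w)` for every `w ∈ V_k`, and `w` can be chosen
arbitrarily close to `p` as `k → ∞`.
-/

open Filter
open scoped RealInnerProductSpace

/-- A point in the closure of the union of an increasing sequence of nonempty sets is the limit of
a sequence whose `k`-th term lies in the `k`-th set. -/
lemma exists_seq_of_mem_closure_iUnion {X : Type*} [PseudoMetricSpace X] (S : ℕ → Set X)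
    (hmono : Monotone S) (hne : (S 0).Nonempty) {x : X} (hx : x ∈ closure (⋃ k, S k)) :
    ∃ v : ℕ → X, (∀ k, v k ∈ S k) ∧ Tendsto (fun k => dist x (v k)) atTop (nhds 0) := by
  have hne' : ∀ k, (S k).Nonempty := fun k => hne.mono (hmono (Nat.zero_le k))
  have h : ∀ k : ℕ, ∃ v ∈ S k, dist x v < Metric.infDist x (S k) + 1 / ((k : ℝ) + 1) := by
    intro k
    apply (Metric.infDist_lt_iff (hne' k)).1
    have : (0 : ℝ) < 1 / ((k : ℝ) + 1) := by positivity
    linarith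
  choose v hv hd using h
  refine ⟨v, hv, ?_⟩
  have hinf : Tendsto (fun k => Metric.infDist x (S k)) atTop (nhds 0) := by
    rw [Metric.tendsto_atTop]
    intro ε hε
    obtain ⟨z, hz, hxz⟩ := Metric.mem_closure_iff.1 hx ε hε
    obtain ⟨N, hN⟩ := Set.mem_iUnion.1 hz
    refine ⟨N, fun n hn => ?_⟩
    rw [Real.dist_eq, sub_zero, abs_of_nonneg Metric.infDist_nonneg]
    exact (Metric.infDist_le_dist_of_mem (hmono hn hN)).trans_lt hxz
  have hsum := hinf.add (tendsto_one_div_add_atTop_nhds_zero_nat (𝕜 := ℝ))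
  rw [add_zero] at hsum
  exact squeeze_zero (fun _ => dist_nonneg) (fun k => (hd k).le) hsum

section Optimization

variable {H : Type*} [NormedAddCommGroup H] [InnerProductSpace ℝ H]
  {W : Type*} [NormedAddCommGroup W] [InnerProductSpace ℝ W]

/-- The first-order optimality condition for a quadratic cost over a convex set. -/
lemma variational_inequality_s15 (A : H →L[ℝ] W) (g : W) (ud : H) {α : ℝ} (hα : 0 < α)
    {S : Set H} (hS : Convex ℝ S) {u : H} (hu : u ∈ S)
    (hmin : ∀ v ∈ S, (1 / 2) * ‖A u - g‖ ^ 2 + (α / 2) * ‖u - ud‖ ^ 2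
      ≤ (1 / 2) * ‖A v - g‖ ^ 2 + (α / 2) * ‖v - ud‖ ^ 2)
    {v : H} (hv : v ∈ S) :
    0 ≤ ⟪A u - g, A (v - u)⟫ + α * ⟪u - ud, v - u⟫ := by
  set D := ⟪A u - g, A (v - u)⟫ + α * ⟪u - ud, v - u⟫ with hD
  set Q := ‖A (v - u)‖ ^ 2 + α * ‖v - u‖ ^ 2 with hQ
  have hQ0 : 0 ≤ Q := by positivity
  have key : ∀ t : ℝ, 0 < t → t ≤ 1 → 0 ≤ D + t / 2 * Q := by
    intro t ht ht1
    have hm := hmin (u + t • (v - u)) (hS.add_smul_sub_mem hu hv ⟨ht.le, ht1⟩)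
    have e1 : A (u + t • (v - u)) - g = (A u - g) + t • A (v - u) := by
      rw [map_add, map_smul]; abel
    have e2 : u + t • (v - u) - ud = (u - ud) + t • (v - u) := by abel
    rw [e1, e2, norm_add_sq_real, norm_add_sq_real (u - ud), inner_smul_right, inner_smul_right,
      norm_smul, norm_smul, Real.norm_eq_abs, mul_pow, mul_pow, sq_abs] at hm
    have : 0 ≤ t * (D + t / 2 * Q) := by rw [hD, hQ]; linarith
    exact nonneg_of_mul_nonneg_right this ht
  by_contra hneg
  push Not at hneg
  -- The first-order term dominates the quadratic one at this step length.
  have hpos : 0 < Q - D := by linarith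
  have h := key (-D / (Q - D)) (div_pos (by linarith) hpos) ((div_le_one hpos).2 (by linarith))
  have hid : D + -D / (Q - D) / 2 * Q = D * (Q - 2 * D) / (2 * (Q - D)) := by
    field_simp
    ring
  rw [hid] at h
  have : D * (Q - 2 * D) / (2 * (Q - D)) < 0 :=
    div_neg_of_neg_of_pos (mul_neg_of_neg_of_pos hneg (by linarith)) (by linarith)
  linarith

/-- Convergence of minimizers `u k` of uniformly strongly convex quadratic costs over varying
sets. Optimality enters only through the variational inequalities: `hvi` tests `u k` with an
admissible `v k` close to `ui`, and `hvii` tests the limiting minimizer `ui` with `u k`. The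
hypothesis `hder` is convergence of the derivatives at `ui` in the dual norm. -/
lemma tendsto_minimizer (A : ℕ → H →L[ℝ] W) (g : ℕ → W) (Ai : H →L[ℝ] W) (gi : W) (ud : H)
    {α L : ℝ} (hα : 0 < α) (hL : 0 ≤ L) (hA : ∀ k h, ‖A k h‖ ≤ L * ‖h‖)
    (u v : ℕ → H) (ui : H)
    (hvi : ∀ k, 0 ≤ ⟪A k (u k) - g k, A k (v k - u k)⟫ + α * ⟪u k - ud, v k - u k⟫)
    (hvii : ∀ k, 0 ≤ ⟪Ai ui - gi, Ai (u k - ui)⟫ + α * ⟪ui - ud, u k - ui⟫)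
    (hv : Tendsto (fun k => ‖v k - ui‖) atTop (nhds 0))
    (ε : ℕ → ℝ) (hε : Tendsto ε atTop (nhds 0))
    (hder : ∀ k h, |⟪A k ui - g k, A k h⟫ - ⟪Ai ui - gi, Ai h⟫| ≤ ε k * ‖h‖) :
    Tendsto (fun k => ‖u k - ui‖) atTop (nhds 0) := by
  set δ : ℕ → ℝ := fun k => ‖v k - ui‖ with hδ
  set G : ℝ := ‖Ai ui - gi‖ * ‖Ai‖ + α * ‖ui - ud‖ with hG
  set ρ : ℕ → ℝ := fun k => ε k + (L ^ 2 + α) * δ k with hρ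
  have key : ∀ k, ‖u k - ui‖ ^ 2 ≤ (ρ k / α) ^ 2 + 2 / α * ((G + ε k) * δ k) := by
    intro k
    obtain ⟨e, he⟩ : ∃ e, e = u k - ui := ⟨_, rfl⟩
    obtain ⟨d, hd⟩ : ∃ d, d = v k - ui := ⟨_, rfl⟩
    rw [← he]
    have h1 := hvi k
    have h2 := hvii k
    rw [← he] at h2
    have e1 : A k (u k) - g k = (A k ui - g k) + A k e := by rw [he, map_sub]; abel
    have e2 : v k - u k = d - e := by rw [he, hd]; abel
    have e3 : u k - ud = (ui - ud) + e := by rw [he]; abel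
    rw [e1, e2, e3, map_sub, inner_add_left, inner_add_left, inner_sub_right, inner_sub_right,
      inner_sub_right, inner_sub_right, real_inner_self_eq_norm_sq,
      real_inner_self_eq_norm_sq] at h1
    have b1 := (abs_le.1 (hder k e)).1
    have b2 := (abs_le.1 (hder k d)).2
    have b3 : ⟪Ai ui - gi, Ai d⟫ ≤ ‖Ai ui - gi‖ * ‖Ai‖ * ‖d‖ := by
      refine (real_inner_le_norm _ _).trans ?_
      rw [mul_assoc]
      exact mul_le_mul_of_nonneg_left (Ai.le_opNorm d) (norm_nonneg _)
    have b4 : ⟪A k e, A k d⟫ ≤ L ^ 2 * ‖e‖ * ‖d‖ := by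
      refine (real_inner_le_norm _ _).trans ?_
      calc ‖A k e‖ * ‖A k d‖ ≤ (L * ‖e‖) * (L * ‖d‖) :=
            mul_le_mul (hA k e) (hA k d) (norm_nonneg _) (by positivity)
        _ = L ^ 2 * ‖e‖ * ‖d‖ := by ring
    have b5 : α * ⟪ui - ud, d⟫ ≤ α * (‖ui - ud‖ * ‖d‖) :=
      mul_le_mul_of_nonneg_left (real_inner_le_norm _ _) hα.le
    have b6 : α * ⟪e, d⟫ ≤ α * (‖e‖ * ‖d‖) :=
      mul_le_mul_of_nonneg_left (real_inner_le_norm _ _) hα.le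
    have hquad : α * ‖e‖ ^ 2 ≤ ρ k * ‖e‖ + (G + ε k) * δ k := by
      have h0 : 0 ≤ ‖A k e‖ ^ 2 := sq_nonneg _
      have hδk : δ k = ‖d‖ := by rw [hd]
      simp only [hρ, hG, hδk]
      linarith
    -- The Young inequality absorbs the linear term.
    have hy : ρ k * ‖e‖ ≤ α / 2 * ‖e‖ ^ 2 + α / 2 * (ρ k / α) ^ 2 := by
      have hr : ρ k = α * (ρ k / α) := by field_simp
      have hs := mul_nonneg hα.le (sq_nonneg (‖e‖ - ρ k / α))
      have hr' : ρ k * ‖e‖ = α * (ρ k / α) * ‖e‖ := by rw [← hr]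
      rw [hr']
      generalize ρ k / α = q at hs ⊢
      linarith
    have h3 : α / 2 * ‖e‖ ^ 2 ≤ α / 2 * ((ρ k / α) ^ 2 + 2 / α * ((G + ε k) * δ k)) := by
      have : α / 2 * (2 / α * ((G + ε k) * δ k)) = (G + ε k) * δ k := by field_simp
      rw [mul_add, this]
      linarith
    exact le_of_mul_le_mul_left h3 (by positivity)
  have hρ0 : Tendsto ρ atTop (nhds 0) := by
    simpa using hε.add (hv.const_mul (L ^ 2 + α))
  have hlim : Tendsto (fun k => (ρ k / α) ^ 2 + 2 / α * ((G + ε k) * δ k)) atTop (nhds 0) := by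
    simpa using ((hρ0.div_const α).pow 2).add (((hε.const_add G).mul hv).const_mul (2 / α))
  have hsq : Tendsto (fun k => ‖u k - ui‖ ^ 2) atTop (nhds 0) :=
    squeeze_zero (fun _ => sq_nonneg _) key hlim
  simpa [Real.sqrt_sq] using hsq.sqrt

end Optimization

section Galerkin

variable {H : Type*} [NormedAddCommGroup H] [InnerProductSpace ℝ H]
  {V : Type*} [NormedAddCommGroup V] [InnerProductSpace ℝ V]

/-- Over a fixed trial space, the solution map is affine, and its linear part is bounded by a
constant that depends only on `ι` and on the coercivity constant. -/
lemma exists_linear_part (ι : V →L[ℝ] H) (B : V →ₗ[ℝ] V →ₗ[ℝ] ℝ) {c : ℝ} (hc : 0 < c)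
    (hBcoer : ∀ v : V, c * ‖v‖ ^ 2 ≤ B v v) (f : H) (X : Submodule ℝ V) (y : H → V)
    (hy : ∀ u : H, y u ∈ X ∧ ∀ φ ∈ X, B (y u) φ = ⟪f + u, ι φ⟫) :
    ∃ T : H →L[ℝ] V, (∀ u, y u = y 0 + T u) ∧ (∀ h, T h ∈ X) ∧
      (∀ h, ∀ φ ∈ X, B (T h) φ = ⟪h, ι φ⟫) ∧ ∀ h, ‖T h‖ ≤ ‖ι‖ / c * ‖h‖ := by
  have huniq : ∀ a ∈ X, ∀ b ∈ X, (∀ φ ∈ X, B a φ = B b φ) → a = b := by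
    intro a ha b hb hab
    have hm := X.sub_mem ha hb
    have h0 : B (a - b) (a - b) = 0 := by
      rw [map_sub B, LinearMap.sub_apply, hab _ hm, sub_self]
    have h1 := hBcoer (a - b)
    rw [h0] at h1
    have h2 : ‖a - b‖ ^ 2 = 0 :=
      le_antisymm (nonpos_of_mul_nonpos_right h1 hc) (sq_nonneg _)
    exact sub_eq_zero.1 (norm_eq_zero.1 (pow_eq_zero_iff (two_ne_zero)|>.1 h2))
  have hmem : ∀ h, y h - y 0 ∈ X := fun h => X.sub_mem (hy h).1 (hy 0).1
  have heq : ∀ h, ∀ φ ∈ X, B (y h - y 0) φ = ⟪h, ι φ⟫ := by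
    intro h φ hφ
    rw [map_sub, LinearMap.sub_apply, (hy h).2 φ hφ, (hy 0).2 φ hφ, add_zero, inner_add_left]
    ring
  have hbd : ∀ h, ‖y h - y 0‖ ≤ ‖ι‖ / c * ‖h‖ := by
    intro h
    have h1 := hBcoer (y h - y 0)
    rw [heq h _ (hmem h)] at h1
    have h2 : ⟪h, ι (y h - y 0)⟫ ≤ ‖h‖ * (‖ι‖ * ‖y h - y 0‖) :=
      (real_inner_le_norm _ _).trans
        (mul_le_mul_of_nonneg_left (ι.le_opNorm _) (norm_nonneg _))
    rcases (norm_nonneg (y h - y 0)).eq_or_lt with h0 | h0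
    · rw [← h0]; positivity
    · rw [div_mul_eq_mul_div, le_div_iff₀ hc]
      refine le_of_mul_le_mul_right ?_ h0
      linarith
  let T₀ : H →ₗ[ℝ] V :=
    { toFun := fun h => y h - y 0
      map_add' := by
        intro a b
        refine huniq _ (hmem _) _ (X.add_mem (hmem a) (hmem b)) fun φ hφ => ?_
        rw [heq _ φ hφ, map_add, LinearMap.add_apply, heq _ φ hφ, heq _ φ hφ, inner_add_left]
      map_smul' := by
        intro t a
        refine huniq _ (hmem _) _ (X.smul_mem _ (hmem a)) fun φ hφ => ?_
        rw [heq _ φ hφ, RingHom.id_apply, map_smul, LinearMap.smul_apply, heq _ φ hφ,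
          real_inner_smul_left, smul_eq_mul] }
  exact ⟨T₀.mkContinuous (‖ι‖ / c) hbd, fun u => (add_sub_cancel (y 0) (y u)).symm, hmem, heq, hbd⟩

/-- **Céa's lemma**: a Galerkin approximation is quasi-optimal in its trial space. -/
lemma norm_sub_le_cea (B : V →ₗ[ℝ] V →ₗ[ℝ] ℝ) {M c : ℝ} (hM : 0 < M) (hc : 0 < c)
    (hBbdd : ∀ v w : V, |B v w| ≤ M * ‖v‖ * ‖w‖)
    (hBcoer : ∀ v : V, c * ‖v‖ ^ 2 ≤ B v v) (X : Submodule ℝ V) {y z : V} (hz : z ∈ X)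
    (horth : ∀ φ ∈ X, B (z - y) φ = 0) {w : V} (hw : w ∈ X) :
    ‖z - y‖ ≤ M / c * ‖y - w‖ := by
  have h1 := hBcoer (z - y)
  have h2 : B (z - y) (z - y) = B (z - y) (w - y) := by
    have h := horth _ (X.sub_mem hz hw)
    rw [map_sub] at h ⊢
    rw [map_sub (B (z - y)) w y]
    linarith
  have h3 := (le_abs_self _).trans (hBbdd (z - y) (w - y))
  rw [norm_sub_rev w y] at h3
  rcases (norm_nonneg (z - y)).eq_or_lt with h0 | h0
  · rw [← h0]; positivity
  · rw [div_mul_eq_mul_div, le_div_iff₀ hc]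
    refine le_of_mul_le_mul_right ?_ h0
    linarith

/-- Lax–Milgram for the adjoint problem on a closed subspace. -/
lemma exists_adjoint_state [CompleteSpace V] (B : V →ₗ[ℝ] V →ₗ[ℝ] ℝ) {M c : ℝ} (hc : 0 < c)
    (hBbdd : ∀ v w : V, |B v w| ≤ M * ‖v‖ * ‖w‖)
    (hBcoer : ∀ v : V, c * ‖v‖ ^ 2 ≤ B v v) (X : Submodule ℝ V) (hX : IsClosed (X : Set V))
    (ℓ : V →L[ℝ] ℝ) : ∃ p ∈ X, ∀ φ ∈ X, B φ p = ℓ φ := by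
  have : CompleteSpace X := hX.completeSpace_coe
  let b : X →L[ℝ] X →L[ℝ] ℝ :=
    LinearMap.mkContinuous₂ (B.flip.domRestrict₁₂ X X) M fun v w => by
      have := hBbdd (w : V) (v : V)
      rw [mul_right_comm] at this
      exact this
  have hb : IsCoercive b := ⟨c, hc, fun v => by
    have := hBcoer (v : V)
    rw [pow_two, ← mul_assoc] at this
    exact this⟩
  let r : X := (InnerProductSpace.toDual ℝ X).symm (ℓ.comp X.subtypeL)
  refine ⟨hb.continuousLinearEquivOfBilin.symm r, Subtype.mem _, fun φ hφ => ?_⟩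
  have h1 := hb.continuousLinearEquivOfBilin_apply (hb.continuousLinearEquivOfBilin.symm r) ⟨φ, hφ⟩
  rw [ContinuousLinearEquiv.apply_symm_apply, InnerProductSpace.toDual_symm_apply] at h1
  exact h1.symm

end Galerkin

/-- In the multilevel abstract optimal control setup, the discrete optimal
controls and states converge strongly to the limiting ones:
`‖u_k* − u_∞*‖_H → 0` and `‖y_k* − y_∞*‖_V → 0` as `k → ∞`. -/
theorem stmt15
    {H : Type*} [NormedAddCommGroup H] [InnerProductSpace ℝ H] [CompleteSpace H]
    {W : Type*} [NormedAddCommGroup W] [InnerProductSpace ℝ W] [CompleteSpace W]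
    {V : Type*} [NormedAddCommGroup V] [InnerProductSpace ℝ V] [CompleteSpace V]
    (ι : V →L[ℝ] H) (C : V →L[ℝ] W)
    (B : V →ₗ[ℝ] V →ₗ[ℝ] ℝ) (M c : ℝ) (hM : 0 < M) (hc : 0 < c)
    (hBbdd : ∀ v w : V, |B v w| ≤ M * ‖v‖ * ‖w‖)
    (hBcoer : ∀ v : V, c * ‖v‖ ^ 2 ≤ B v v)
    (f : H) (yd : W) (ud : H) (α : ℝ) (hα : 0 < α)
    (Uad : Set H) (hUad_ne : Uad.Nonempty) (hUad_cl : IsClosed Uad)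
    (hUad_conv : Convex ℝ Uad)
    (Vk : ℕ → Submodule ℝ V)
    (hVcl : ∀ k, IsClosed (Vk k : Set V)) (hVmono : ∀ k, Vk k ≤ Vk (k + 1))
    (Uk : ℕ → Submodule ℝ H)
    (hUcl : ∀ k, IsClosed (Uk k : Set H)) (hUmono : ∀ k, Uk k ≤ Uk (k + 1))
    (hU0ad_ne : ((Uk 0 : Set H) ∩ Uad).Nonempty)
    (yk : ℕ → H → V)
    (hyk : ∀ (k : ℕ) (u : H), yk k u ∈ Vk k ∧ ∀ φ ∈ Vk k, B (yk k u) φ = ⟪f + u, ι φ⟫)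
    (Jk : ℕ → H → ℝ)
    (hJk : ∀ (k : ℕ) (u : H),
      Jk k u = (1 / 2) * ‖C (yk k u) - yd‖ ^ 2 + (α / 2) * ‖u - ud‖ ^ 2)
    (Vinf : Submodule ℝ V)
    (hVinf : (Vinf : Set V) = closure (⋃ k, (Vk k : Set V)))
    (Uadinf : Set H)
    (hUadinf : Uadinf = closure (⋃ k, ((Uk k : Set H) ∩ Uad)))
    (yinf : H → V)
    (hyinf : ∀ u : H, yinf u ∈ Vinf ∧ ∀ φ ∈ Vinf, B (yinf u) φ = ⟪f + u, ι φ⟫)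
    (Jinf : H → ℝ)
    (hJinf : ∀ u : H,
      Jinf u = (1 / 2) * ‖C (yinf u) - yd‖ ^ 2 + (α / 2) * ‖u - ud‖ ^ 2)
    (ustar : ℕ → H)
    (hustar : ∀ k, ustar k ∈ (Uk k : Set H) ∩ Uad ∧
      ∀ u ∈ (Uk k : Set H) ∩ Uad, Jk k (ustar k) ≤ Jk k u)
    (uinfstar : H)
    (huinfstar : uinfstar ∈ Uadinf ∧ ∀ u ∈ Uadinf, Jinf uinfstar ≤ Jinf u) :
    Tendsto (fun k => ‖ustar k - uinfstar‖) atTop (nhds 0) ∧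
      Tendsto (fun k => ‖yk k (ustar k) - yinf uinfstar‖) atTop (nhds 0) := by
  obtain ⟨Ti, hTi, hTimem, hTieq, hTibd⟩ := exists_linear_part ι B hc hBcoer f Vinf yinf hyinf
  choose T hT hTmem hTeq hTbd using
    fun k => exists_linear_part ι B hc hBcoer f (Vk k) (yk k) (hyk k)
  set K := ‖ι‖ / c with hK
  have hK0 : 0 ≤ K := by positivity
  have hVm : Monotone Vk := monotone_nat_of_le_succ hVmono
  have hUm : Monotone fun k => (Uk k : Set H) ∩ Uad := fun i j hij =>
    Set.inter_subset_inter_left _ (monotone_nat_of_le_succ hUmono hij)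
  have hVle : ∀ k, Vk k ≤ Vinf := by
    intro k x hx
    have : x ∈ closure (⋃ k, (Vk k : Set V)) := subset_closure (Set.mem_iUnion.2 ⟨k, hx⟩)
    rw [← hVinf] at this
    exact this
  have hVapprox : ∀ p ∈ Vinf, ∃ w : ℕ → V, (∀ k, w k ∈ Vk k) ∧
      Tendsto (fun k => ‖p - w k‖) atTop (nhds 0) := by
    intro p hp
    have hp' : p ∈ closure (⋃ k, (Vk k : Set V)) := by rw [← hVinf]; exact hp
    simpa only [dist_eq_norm, SetLike.mem_coe] using exists_seq_of_mem_closure_iUnion (fun k => (Vk k : Set V))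
      (fun i j hij => hVm hij) ⟨0, (Vk 0).zero_mem⟩ hp'
  have hCea : ∀ u, Tendsto (fun k => ‖yk k u - yinf u‖) atTop (nhds 0) := by
    intro u
    obtain ⟨w, hw, hwlim⟩ := hVapprox _ (hyinf u).1
    have hlim := hwlim.const_mul (M / c)
    rw [mul_zero] at hlim
    refine squeeze_zero (fun _ => norm_nonneg _) (fun k => ?_) hlim
    refine norm_sub_le_cea B hM hc hBbdd hBcoer (Vk k) (hyk k u).1 (fun φ hφ => ?_) (hw k)
    rw [map_sub, LinearMap.sub_apply, (hyk k u).2 φ hφ, (hyinf u).2 φ (hVle k hφ), sub_self]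
  have hVinfcl : IsClosed (Vinf : Set V) := by rw [hVinf]; exact isClosed_closure
  set r : W := C (yinf uinfstar) - yd with hr
  obtain ⟨p, hp, hpeq⟩ := exists_adjoint_state B hc hBbdd hBcoer Vinf hVinfcl
    ((innerSL ℝ r).comp C)
  obtain ⟨w, hw, hwlim⟩ := hVapprox p hp
  have hdual : ∀ k h, |⟪r, C (T k h - Ti h)⟫| ≤ 2 * M * K * ‖p - w k‖ * ‖h‖ := by
    intro k h
    have h1 : B (T k h - Ti h) p = ⟪r, C (T k h - Ti h)⟫ :=
      hpeq _ (Vinf.sub_mem (hVle k (hTmem k h)) (hTimem h))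
    have h2 : B (T k h - Ti h) (w k) = 0 := by
      rw [map_sub, LinearMap.sub_apply, hTeq k h _ (hw k), hTieq h _ (hVle k (hw k)), sub_self]
    have h3 := hBbdd (T k h - Ti h) (p - w k)
    rw [map_sub (B (T k h - Ti h)), h2, sub_zero, h1] at h3
    have h4 : ‖T k h - Ti h‖ ≤ 2 * K * ‖h‖ := by
      have := norm_sub_le (T k h) (Ti h)
      linarith [hTbd k h, hTibd h]
    calc _ ≤ M * ‖T k h - Ti h‖ * ‖p - w k‖ := h3
      _ ≤ M * (2 * K * ‖h‖) * ‖p - w k‖ := by gcongr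
      _ = _ := by ring
  have hAy : ∀ k u, C (yk k u) - yd = (C ∘L T k) u - (yd - C (yk k 0)) := by
    intro k u
    rw [hT k u, map_add, ContinuousLinearMap.comp_apply]; abel
  have hAyi : ∀ u, C (yinf u) - yd = (C ∘L Ti) u - (yd - C (yinf 0)) := by
    intro u
    rw [hTi u, map_add, ContinuousLinearMap.comp_apply]; abel
  have hCT : ∀ k h, ‖(C ∘L T k) h‖ ≤ ‖C‖ * K * ‖h‖ := by
    intro k h
    rw [mul_assoc]
    exact (C.le_opNorm _).trans (mul_le_mul_of_nonneg_left (hTbd k h) (norm_nonneg _))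
  have hui : uinfstar ∈ closure (⋃ k, ((Uk k : Set H) ∩ Uad)) := hUadinf ▸ huinfstar.1
  obtain ⟨v, hv, hvlim⟩ := exists_seq_of_mem_closure_iUnion _ hUm hU0ad_ne hui
  have hUconv : ∀ k, Convex ℝ ((Uk k : Set H) ∩ Uad) := fun k => (Uk k).convex.inter hUad_conv
  have hUinfconv : Convex ℝ Uadinf := by
    rw [hUadinf]
    exact (hUm.directed_le.convex_iUnion fun {k} => hUconv k).closure
  have hu : Tendsto (fun k => ‖ustar k - uinfstar‖) atTop (nhds 0) := by
    refine tendsto_minimizer (fun k => C ∘L T k) (fun k => yd - C (yk k 0)) (C ∘L Ti)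
      (yd - C (yinf 0)) ud hα (L := ‖C‖ * K) (by positivity) hCT ustar v uinfstar
      (fun k => ?_) (fun k => ?_) ?_
      (fun k => ‖C‖ * ‖yk k uinfstar - yinf uinfstar‖ * (‖C‖ * K) + 2 * M * K * ‖p - w k‖) ?_
      (fun k h => ?_)
    · refine variational_inequality_s15 _ _ ud hα (hUconv k) (hustar k).1 (fun z hz => ?_) (hv k)
      have := (hustar k).2 z hz
      rwa [hJk, hJk, hAy, hAy] at this
    · refine variational_inequality_s15 _ _ ud hα hUinfconv huinfstar.1 (fun z hz => ?_) ?_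
      · have := huinfstar.2 z hz
        rwa [hJinf, hJinf, hAyi, hAyi] at this
      · rw [hUadinf]
        exact subset_closure (Set.mem_iUnion.2 ⟨k, (hustar k).1⟩)
    · simpa only [dist_eq_norm, norm_sub_rev uinfstar] using hvlim
    · simpa using (((hCea uinfstar).const_mul ‖C‖).mul_const (‖C‖ * K)).add
        (hwlim.const_mul (2 * M * K))
    · rw [← hAy, ← hAyi, ← hr]
      have hsplit : ⟪C (yk k uinfstar) - yd, (C ∘L T k) h⟫ - ⟪r, (C ∘L Ti) h⟫
          = ⟪C (yk k uinfstar - yinf uinfstar), (C ∘L T k) h⟫ + ⟪r, C (T k h - Ti h)⟫ := by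
        have e : C (yk k uinfstar) - yd = C (yk k uinfstar - yinf uinfstar) + r := by
          rw [hr, map_sub]; abel
        rw [e, inner_add_left, map_sub C (T k h), inner_sub_right]
        simp only [ContinuousLinearMap.comp_apply]
        ring
      rw [hsplit, add_mul]
      refine (abs_add_le _ _).trans (add_le_add ?_ (hdual k h))
      refine (abs_real_inner_le_norm _ _).trans ?_
      rw [mul_assoc _ (‖C‖ * K)]
      exact mul_le_mul (C.le_opNorm _) (hCT k h) (norm_nonneg _) (by positivity)
  refine ⟨hu, ?_⟩
  have hlim := (hu.const_mul K).add (hCea uinfstar)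
  rw [mul_zero, add_zero] at hlim
  refine squeeze_zero (fun _ => norm_nonneg _) (fun k => ?_) hlim
  have e : yk k (ustar k) - yinf uinfstar
      = T k (ustar k - uinfstar) + (yk k uinfstar - yinf uinfstar) := by
    rw [map_sub, hT k (ustar k), hT k uinfstar]; abel
  rw [e]
  exact (norm_add_le _ _).trans (by linarith [hTbd k (ustar k - uinfstar)])
end
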